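/- Fix ι ∈ {identity, complex conjugation} on ℂ and ε ∈ {1,−1}. Let (V,B) be an H-module with an H-invariant nondegenerate (ι,ε)-symmetric form B. Suppose V is bi-isotypical: there is an irreducible H-module π, not isomorphic to π^{ι,*}, such that every irreducible invariant subspace of V is isomorphic to π or to π^{ι,*}. Let Z = I_π be the sum of all invariant subspaces of V isomorphic to π. Then (V,B) is H-equivariantly isometric to Z × Z^{ι,*} equipped with the tautological (ι,ε)-symmetric form. -/

import Mathlib

variable {H V P : Type*}

/-- `U` is invariant under the representation `ρ`. -/
def Invt [Group H] [AddCommGroup V] [Module ℂ V] (ρ : Representation ℂ H V)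
    (U : Submodule ℂ V) : Prop :=
  ∀ (h : H) (v : V), v ∈ U → ρ h v ∈ U

/-- `V` is a semisimple `H`-module. -/
def Semisimple [Group H] [AddCommGroup V] [Module ℂ V] (ρ : Representation ℂ H V) : Prop :=
  ∀ U : Submodule ℂ V, Invt ρ U → ∃ U', Invt ρ U' ∧ IsCompl U U'

/-- `U` is an irreducible invariant subspace. -/
def IrredSub [Group H] [AddCommGroup V] [Module ℂ V] (ρ : Representation ℂ H V)
    (U : Submodule ℂ V) : Prop :=
  Invt ρ U ∧ U ≠ ⊥ ∧ ∀ U' ≤ U, Invt ρ U' → U' = ⊥ ∨ U' = U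

/-- The invariant subspace `U ⊆ V` is isomorphic, as an `H`-module, to the external
`H`-module `P`. -/
def RepIsoExt [Group H] [AddCommGroup V] [Module ℂ V] [AddCommGroup P] [Module ℂ P]
    (ρ : Representation ℂ H V) (ρP : Representation ℂ H P) (U : Submodule ℂ V) : Prop :=
  ∃ e : U ≃ₗ[ℂ] P, ∀ (h : H) (v : V) (hv : v ∈ U) (hv' : ρ h v ∈ U),
    e ⟨ρ h v, hv'⟩ = ρP h (e ⟨v, hv⟩)

/-- The invariant subspace `U ⊆ V` is isomorphic, as an `H`-module, to the
`σ`-twisted (conjugate-)dual of the external `H`-module `P`, with contragredient action. -/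
def RepDualIsoExt [Group H] [AddCommGroup V] [Module ℂ V] [AddCommGroup P] [Module ℂ P]
    (σ : ℂ →+* ℂ) (ρ : Representation ℂ H V) (ρP : Representation ℂ H P)
    (U : Submodule ℂ V) : Prop :=
  ∃ e : U ≃ₗ[ℂ] (P →ₛₗ[σ] ℂ), ∀ (h : H) (v : V) (hv : v ∈ U) (hv' : ρ h v ∈ U) (w : P),
    e ⟨ρ h v, hv'⟩ w = e ⟨v, hv⟩ (ρP h⁻¹ w)

/-!
Composing two homomorphisms `τ → V` with an invariant form yields a homomorphism `τ → τ^{σ,*}`,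
which is zero by Schur's lemma when `τ` is irreducible and not isomorphic to `τ^{σ,*}`. Taking
`τ = π` and `τ = π^{σ,*}`, the isotypic parts `Z` and `Z'` of these two types are totally isotropic,
and by semisimplicity they span `V`. Nondegeneracy then gives `Z ∩ Z' = 0` and makes the pairing
`Z' → Z^{σ,*}` and its transpose `Z → Z'^{σ,*}` injective, hence bijective, so that
`z + z' ↦ (z, B(·, z'))` is the isometry.
-/

open Module Representation

theorem eq_top_of_forall_isAtom_le {α : Type*} [Lattice α] [BoundedOrder α]
    [ComplementedLattice α] [IsAtomic α] {b : α} (hb : ∀ a, IsAtom a → a ≤ b) : b = ⊤ := by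
  obtain ⟨c, hc⟩ := exists_isCompl b
  obtain rfl | ⟨a, ha, hac⟩ := eq_bot_or_exists_atom_le c
  · exact eq_top_of_isCompl_bot hc
  · exact (ha.1 (le_bot_iff.1 (hc.disjoint (hb a ha) hac))).elim

section SemilinearDual

variable {K X Y : Type*} [Field K] (σ : K →+* K) [RingHomInvPair σ σ]
  [AddCommGroup X] [Module K X] [AddCommGroup Y] [Module K Y]

/-- The identification `f ↦ σ ∘ f` of the linear dual with the `σ`-twisted dual. -/
def dualEquivSemilinearDual : Dual K X ≃ₛₗ[σ] (X →ₛₗ[σ] K) where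
  toFun f := σ.toSemilinearMap.comp f
  map_add' f g := by ext; simp
  map_smul' c f := by ext; simp
  invFun g := σ.toSemilinearMap.comp g
  left_inv f := by ext; simp
  right_inv g := by ext; simp

instance [FiniteDimensional K X] : FiniteDimensional K (X →ₛₗ[σ] K) :=
  Module.Finite.of_surjective _ (dualEquivSemilinearDual (X := X) σ).surjective

theorem finrank_semilinearDual : finrank K (X →ₛₗ[σ] K) = finrank K X := by
  have hrank : Module.rank K (Dual K X) = Module.rank K (X →ₛₗ[σ] K) :=
    rank_eq_of_equiv_equiv σ (dualEquivSemilinearDual σ).toAddEquiv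
      (RingHomInvPair.toRingEquiv σ σ).bijective (map_smulₛₗ (dualEquivSemilinearDual σ))
  exact (congrArg Cardinal.toNat hrank).symm.trans Subspace.dual_finrank_eq

theorem eq_zero_of_forall_semilinearDual_apply_eq_zero {x : X}
    (hx : ∀ f : X →ₛₗ[σ] K, f x = 0) : x = 0 := by
  rw [← forall_dual_apply_eq_zero_iff K]
  intro f
  have hσf : σ (f x) = 0 := hx (dualEquivSemilinearDual σ f)
  exact (map_eq_zero σ).1 hσf

variable {σ}

/-- The conjugate transpose `X → Y^{σ,*}`, `x ↦ (y ↦ σ (A y x))`, of a map `A : Y → X^{σ,*}`. -/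
def semilinearTranspose (A : Y →ₗ[K] X →ₛₗ[σ] K) : X →ₗ[K] Y →ₛₗ[σ] K :=
  (dualEquivSemilinearDual σ).toLinearMap.comp A.flip

@[simp]
theorem semilinearTranspose_apply (A : Y →ₗ[K] X →ₛₗ[σ] K) (x : X) (y : Y) :
    semilinearTranspose A x y = σ (A y x) :=
  rfl

theorem bijective_of_injective_of_injective_semilinearTranspose [FiniteDimensional K X]
    {A : Y →ₗ[K] X →ₛₗ[σ] K} (hA : Function.Injective A)
    (hA' : Function.Injective (semilinearTranspose A)) : Function.Bijective A := by
  have : FiniteDimensional K Y := FiniteDimensional.of_injective A hA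
  have hfinrank : finrank K Y = finrank K (X →ₛₗ[σ] K) := by
    apply le_antisymm (LinearMap.finrank_le_finrank_of_injective hA)
    rw [finrank_semilinearDual, ← finrank_semilinearDual (X := Y) σ]
    exact LinearMap.finrank_le_finrank_of_injective hA'
  exact ⟨hA, (LinearMap.injective_iff_surjective_of_finrank_eq_finrank hfinrank).1 hA⟩

end SemilinearDual

section Contragredient

variable {K X Y : Type*} [Field K] [Group H] {σ : K →+* K}
  [AddCommGroup X] [Module K X] [AddCommGroup Y] [Module K Y]
  {π : Representation K H X} {τ : Representation K H Y}

variable (σ) in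
/-- The contragredient `π^{σ,*}`: the action of `H` on the `σ`-twisted dual of `π`. -/
def contragredient (π : Representation K H X) : Representation K H (X →ₛₗ[σ] K) where
  toFun h :=
    { toFun f := f.comp (π h⁻¹)
      map_add' _ _ := rfl
      map_smul' _ _ := rfl }
  map_one' := by ext; simp
  map_mul' h h' := by ext; simp

@[simp]
theorem contragredient_apply (h : H) (f : X →ₛₗ[σ] K) (x : X) :
    contragredient σ π h f x = f (π h⁻¹ x) :=
  rfl

/-- The contragredient of a homomorphism of `H`-modules, by precomposition. -/
def contragredientMap (f : IntertwiningMap τ π) :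
    IntertwiningMap (contragredient σ π) (contragredient σ τ) where
  toFun g := g.comp f.toLinearMap
  map_add' _ _ := rfl
  map_smul' _ _ := rfl
  isIntertwining' h := by
    ext g y
    simp [IntertwiningMap.isIntertwining]

/-- The inclusion of a subrepresentation as a homomorphism of `H`-modules. -/
def subrepresentationSubtype (U : Subrepresentation π) : IntertwiningMap U.toRepresentation π where
  toLinearMap := U.toSubmodule.subtype
  isIntertwining' _ := rfl

@[simp]
theorem subrepresentationSubtype_apply (U : Subrepresentation π) (u : U.toSubmodule) :
    subrepresentationSubtype U u = u :=
  rfl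

theorem isIrreducible_of_forall_eq_bot_or_eq_top [Nontrivial X]
    (h : ∀ U : Subrepresentation π, U = ⊥ ∨ U = ⊤) : π.IsIrreducible where
  exists_pair_ne :=
    ⟨⊥, ⊤, fun hbot => bot_ne_top (congrArg Subrepresentation.toSubmodule hbot)⟩
  eq_bot_or_eq_top := h

theorem nontrivial_of_isEmpty_equiv_contragredient
    (hπ : IsEmpty (π.Equiv (contragredient σ π))) : Nontrivial X := by
  by_contra hX
  rw [not_nontrivial_iff_subsingleton] at hX
  have : Subsingleton (X →ₛₗ[σ] K) :=
    ⟨fun f g => LinearMap.ext fun x => by rw [Subsingleton.elim x 0, map_zero, map_zero]⟩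
  exact hπ.false (.mk 0 fun _ => Subsingleton.elim _ _)

variable [RingHomInvPair σ σ]

/-- `semilinearTranspose` as an operation on homomorphisms of `H`-modules. -/
def intertwiningTranspose (f : IntertwiningMap τ (contragredient σ π)) :
    IntertwiningMap π (contragredient σ τ) where
  toLinearMap := semilinearTranspose f.toLinearMap
  isIntertwining' h := by
    ext x y
    simp [IntertwiningMap.isIntertwining]

@[simp]
theorem intertwiningTranspose_apply (f : IntertwiningMap τ (contragredient σ π)) (x : X) (y : Y) :
    intertwiningTranspose f x y = σ (f y x) :=
  rfl

theorem intertwiningTranspose_intertwiningTranspose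
    (f : IntertwiningMap τ (contragredient σ π)) :
    intertwiningTranspose (intertwiningTranspose f) = f := by
  ext y x
  simp

theorem intertwiningTranspose_id_injective :
    Function.Injective (intertwiningTranspose (.id (contragredient σ π))) := by
  refine (injective_iff_map_eq_zero _).2 fun x hx => ?_
  refine eq_zero_of_forall_semilinearDual_apply_eq_zero σ fun f => ?_
  exact (map_eq_zero σ).1 (DFunLike.congr_fun hx f)

variable [FiniteDimensional K X]

theorem intertwiningMap_bijective_of_injective_of_injective_transpose
    {f : IntertwiningMap τ (contragredient σ π)} (hf : Function.Injective f)
    (hf' : Function.Injective (intertwiningTranspose f)) : Function.Bijective f :=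
  bijective_of_injective_of_injective_semilinearTranspose hf hf'

variable (σ π) in
/-- The evaluation isomorphism `π ≃ (π^{σ,*})^{σ,*}`. -/
noncomputable def doubleContragredientEquiv :
    π.Equiv (contragredient σ (contragredient σ π)) :=
  (intertwiningTranspose (.id (contragredient σ π))).ofBijective <|
    intertwiningMap_bijective_of_injective_of_injective_transpose
      intertwiningTranspose_id_injective <| by
        rw [intertwiningTranspose_intertwiningTranspose]
        exact Function.injective_id

theorem intertwiningMap_eq_zero_or_bijective_of_injective [π.IsIrreducible]
    {f : IntertwiningMap τ (contragredient σ π)} (hf : Function.Injective f) :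
    f = 0 ∨ Function.Bijective f := by
  obtain hinj | hzero := IsIrreducible.injective_or_eq_zero (intertwiningTranspose f)
  · exact .inr (intertwiningMap_bijective_of_injective_of_injective_transpose hf hinj)
  · left
    ext y x
    exact (map_eq_zero σ).1 (LinearMap.congr_fun (DFunLike.congr_fun hzero x) y)

instance contragredient_isIrreducible [π.IsIrreducible] :
    (contragredient σ π).IsIrreducible := by
  have : Nontrivial X := IsSimpleModule.nontrivial (MonoidAlgebra K H) π.asModule
  have : Nontrivial (X →ₛₗ[σ] K) := (dualEquivSemilinearDual σ).symm.toEquiv.nontrivial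
  refine isIrreducible_of_forall_eq_bot_or_eq_top fun N => ?_
  have hinj : Function.Injective (subrepresentationSubtype N) := N.toSubmodule.injective_subtype
  obtain hzero | hbij := intertwiningMap_eq_zero_or_bijective_of_injective (Y := N.toSubmodule)
    (τ := N.toRepresentation) hinj
  · left
    refine Subrepresentation.toSubmodule_injective ((Submodule.eq_bot_iff _).2 fun f hf => ?_)
    exact DFunLike.congr_fun hzero ⟨f, hf⟩
  · right
    refine Subrepresentation.toSubmodule_injective (Submodule.eq_top_iff'.2 fun f => ?_)
    obtain ⟨g, rfl⟩ := hbij.surjective f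
    exact g.2

end Contragredient

section InvariantForm

variable {K : Type*} [Field K] [Group H] {σ : K →+* K} [AddCommGroup V] [Module K V]
  {ρ : Representation K H V} {B : V →ₛₗ[σ] V →ₗ[K] K}

/-- An invariant sesquilinear form `B` as the homomorphism of `H`-modules `V → V^{σ,*}`,
`v ↦ B(·, v)`. -/
def invariantFormMap (hB : ∀ h v w, B (ρ h v) (ρ h w) = B v w) :
    IntertwiningMap ρ (contragredient σ ρ) where
  toLinearMap := B.flip
  isIntertwining' h := by
    ext v w
    simpa using hB h (ρ h⁻¹ w) v

/-- The pairing `W' → W^{σ,*}` between two subrepresentations induced by an invariant form. -/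
def invariantFormPairing (hB : ∀ h v w, B (ρ h v) (ρ h w) = B v w)
    (W W' : Subrepresentation ρ) :
    IntertwiningMap W'.toRepresentation (contragredient σ W.toRepresentation) :=
  (contragredientMap (τ := W.toRepresentation) (subrepresentationSubtype W)).comp
    ((invariantFormMap hB).comp (subrepresentationSubtype W'))

@[simp]
theorem invariantFormPairing_apply (hB : ∀ h v w, B (ρ h v) (ρ h w) = B v w)
    (W W' : Subrepresentation ρ) (y : W'.toSubmodule) (x : W.toSubmodule) :
    invariantFormPairing hB W W' y x = B x y :=
  rfl

/-- The tautological form `(v, v*)·(w, w*) = ε σ⟨v*, w⟩ + ⟨w*, v⟩` on `X × X^{σ,*}`. -/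
def tautologicalForm {X : Type*} [AddCommGroup X] [Module K X] (ε : K)
    (v w : X × (X →ₛₗ[σ] K)) : K :=
  ε * σ (v.2 w.1) + w.2 v.1

/-- The sum of two complementary subrepresentations as an isomorphism of `H`-modules. -/
noncomputable def prodEquivOfIsComplSubrepresentation (W W' : Subrepresentation ρ)
    (h : IsCompl W.toSubmodule W'.toSubmodule) :
    (W.toRepresentation.prod W'.toRepresentation).Equiv ρ :=
  .mk (W.toSubmodule.prodEquivOfIsCompl W'.toSubmodule h) fun g =>
    LinearMap.ext fun x => (map_add (ρ g) (x.1 : V) x.2).symm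

theorem eq_zero_of_forall_apply_eq_zero_of_sup_eq_top (hsep : B.SeparatingLeft)
    {W W' : Submodule K V} (hsup : W ⊔ W' = ⊤) {v : V} (hW : ∀ w ∈ W, B v w = 0)
    (hW' : ∀ w ∈ W', B v w = 0) : v = 0 := by
  have hker : W ⊔ W' ≤ LinearMap.ker (B v) := sup_le hW hW'
  exact hsep v fun w => hker (hsup.ge Submodule.mem_top)

theorem isCompl_of_le_orthogonalBilin (hsep : B.SeparatingLeft) (hrefl : B.IsRefl)
    {W W' : Submodule K V} (hW : W ≤ W.orthogonalBilin B) (hW' : W' ≤ W'.orthogonalBilin B)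
    (hsup : W ⊔ W' = ⊤) : IsCompl W W' := by
  refine ⟨Submodule.disjoint_def.2 fun v hv hv' => ?_, codisjoint_iff.2 hsup⟩
  exact eq_zero_of_forall_apply_eq_zero_of_sup_eq_top hsep hsup
    (fun w hw => hrefl _ _ (hW hv w hw)) (fun w hw => hrefl _ _ (hW' hv' w hw))

variable [RingHomInvPair σ σ] [FiniteDimensional K V]

theorem invariantFormPairing_bijective (hB : ∀ h v w, B (ρ h v) (ρ h w) = B v w)
    (hsep : B.SeparatingLeft) (hrefl : B.IsRefl) {W W' : Subrepresentation ρ}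
    (hW : W.toSubmodule ≤ W.toSubmodule.orthogonalBilin B)
    (hW' : W'.toSubmodule ≤ W'.toSubmodule.orthogonalBilin B)
    (hsup : W.toSubmodule ⊔ W'.toSubmodule = ⊤) :
    Function.Bijective (invariantFormPairing hB W W') := by
  have hinj : Function.Injective (invariantFormPairing hB W W') := by
    refine (injective_iff_map_eq_zero _).2 fun y hy => Subtype.ext ?_
    exact eq_zero_of_forall_apply_eq_zero_of_sup_eq_top hsep hsup
      (fun w hw => hrefl _ _ (LinearMap.congr_fun hy ⟨w, hw⟩))
      (fun w hw => hrefl _ _ (hW' y.2 w hw))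
  have hinj' : Function.Injective (intertwiningTranspose (invariantFormPairing hB W W')) := by
    refine (injective_iff_map_eq_zero _).2 fun x hx => Subtype.ext ?_
    exact eq_zero_of_forall_apply_eq_zero_of_sup_eq_top hsep hsup
      (fun w hw => hrefl _ _ (hW x.2 w hw))
      (fun w hw => (map_eq_zero σ).1 (LinearMap.congr_fun hx ⟨w, hw⟩))
  exact intertwiningMap_bijective_of_injective_of_injective_transpose hinj hinj'

theorem exists_isometry_tautologicalForm_of_isotropic
    (hB : ∀ h v w, B (ρ h v) (ρ h w) = B v w) {ε : K} (hsymm : ∀ v w, B w v = ε * σ (B v w))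
    (hsep : B.SeparatingLeft) {W W' : Subrepresentation ρ}
    (hW : W.toSubmodule ≤ W.toSubmodule.orthogonalBilin B)
    (hW' : W'.toSubmodule ≤ W'.toSubmodule.orthogonalBilin B)
    (hsup : W.toSubmodule ⊔ W'.toSubmodule = ⊤) :
    ∃ Φ : ρ.Equiv (W.toRepresentation.prod (contragredient σ W.toRepresentation)),
      ∀ v w, tautologicalForm ε (Φ v) (Φ w) = B v w := by
  have hrefl : B.IsRefl := fun v w h => by rw [hsymm, h, map_zero, mul_zero]
  let e := prodEquivOfIsComplSubrepresentation W W'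
    (isCompl_of_le_orthogonalBilin hsep hrefl hW hW' hsup)
  let f := (IntertwiningMap.fst K W.toRepresentation W'.toRepresentation).prod
    ((invariantFormPairing hB W W').comp (.snd K W.toRepresentation W'.toRepresentation))
  have hf : Function.Bijective f :=
    Function.bijective_id.prodMap (invariantFormPairing_bijective hB hsep hrefl hW hW' hsup)
  refine ⟨e.symm.trans (f.ofBijective hf), fun v w => ?_⟩
  obtain ⟨⟨x, y⟩, rfl⟩ := e.toLinearEquiv.surjective v
  obtain ⟨⟨x', y'⟩, rfl⟩ := e.toLinearEquiv.surjective w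
  have hxx' : B x x' = 0 := hW x'.2 x x.2
  have hyy' : B y y' = 0 := hW' y'.2 y y.2
  have hfxy : f (x, y) = (x, invariantFormPairing hB W W' y) := rfl
  have hfxy' : f (x', y') = (x', invariantFormPairing hB W W' y') := rfl
  calc
    _ = tautologicalForm ε (f (x, y)) (f (x', y')) := by simp
    _ = B y x' + B x y' := by
      simp only [tautologicalForm, hfxy, hfxy', invariantFormPairing_apply, ← hsymm]
    _ = B (x + y) (x' + y') := by simp [hxx', hyy', add_comm]

end InvariantForm

section Isotypic

variable {K X : Type*} [Field K] [Group H] {σ : K →+* K} [AddCommGroup V] [Module K V]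
  [AddCommGroup X] [Module K X] {ρ : Representation K H V} {τ : Representation K H X}
  {B : V →ₛₗ[σ] V →ₗ[K] K}

variable (ρ τ) in
/-- The `τ`-isotypic part of `ρ`: the sum of all subrepresentations isomorphic to `τ`. -/
def isotypicSubrepresentation : Subrepresentation ρ where
  toSubmodule := ⨆ (U : Subrepresentation ρ) (_ : Nonempty (U.toRepresentation.Equiv τ)),
    U.toSubmodule
  apply_mem_toSubmodule h := by
    simp only [Submodule.mem_iSup, iSup_le_iff]
    exact fun v hv N hN => hv (N.comap (ρ h)) fun U hU u hu =>
      hN U hU (U.apply_mem_toSubmodule h hu)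

theorem isotypicSubrepresentation_le_iff {N : Submodule K V} :
    (isotypicSubrepresentation ρ τ).toSubmodule ≤ N ↔
      ∀ U : Subrepresentation ρ, Nonempty (U.toRepresentation.Equiv τ) → U.toSubmodule ≤ N :=
  iSup₂_le_iff

theorem le_isotypicSubrepresentation {U : Subrepresentation ρ}
    (hU : Nonempty (U.toRepresentation.Equiv τ)) : U ≤ isotypicSubrepresentation ρ τ :=
  isotypicSubrepresentation_le_iff.1 le_rfl U hU

theorem invariantForm_apply_eq_zero_of_isEmpty_equiv_contragredient [τ.IsIrreducible]
    [(contragredient σ τ).IsIrreducible] [IsEmpty (τ.Equiv (contragredient σ τ))]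
    (hB : ∀ h v w, B (ρ h v) (ρ h w) = B v w) (f g : IntertwiningMap τ ρ) (x y : X) :
    B (f x) (g y) = 0 := by
  have hzero : (contragredientMap f).comp ((invariantFormMap hB).comp g) = 0 :=
    Subsingleton.elim _ _
  exact LinearMap.congr_fun (DFunLike.congr_fun hzero y) x

theorem isotypicSubrepresentation_le_orthogonalBilin [τ.IsIrreducible]
    [(contragredient σ τ).IsIrreducible] [IsEmpty (τ.Equiv (contragredient σ τ))]
    (hB : ∀ h v w, B (ρ h v) (ρ h w) = B v w) :
    (isotypicSubrepresentation ρ τ).toSubmodule ≤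
      (isotypicSubrepresentation ρ τ).toSubmodule.orthogonalBilin B := by
  refine isotypicSubrepresentation_le_iff.2 fun U ⟨e⟩ u hu v hv => ?_
  have hker : (isotypicSubrepresentation ρ τ).toSubmodule ≤ LinearMap.ker (B.flip u) := by
    refine isotypicSubrepresentation_le_iff.2 fun U' ⟨e'⟩ u' hu' => ?_
    have hzero := invariantForm_apply_eq_zero_of_isEmpty_equiv_contragredient hB
      ((subrepresentationSubtype U').comp e'.symm.toIntertwiningMap)
      ((subrepresentationSubtype U).comp e.symm.toIntertwiningMap) (e' ⟨u', hu'⟩) (e ⟨u, hu⟩)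
    simpa using hzero
  exact hker hv

instance [ρ.IsSemisimpleRepresentation] : IsAtomic (Subrepresentation ρ) := by
  have := (isSemisimpleRepresentation_iff_isSemisimpleModule_asModule ρ).1 ‹_›
  exact Subrepresentation.subrepresentationSubmoduleOrderIso.isAtomic_iff.2 inferInstance

theorem isotypicSubrepresentation_sup_eq_top {Y : Type*} [AddCommGroup Y] [Module K Y]
    {τ' : Representation K H Y} [ρ.IsSemisimpleRepresentation]
    (hρ : ∀ U : Subrepresentation ρ, IsAtom U →
      Nonempty (U.toRepresentation.Equiv τ) ∨ Nonempty (U.toRepresentation.Equiv τ')) :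
    isotypicSubrepresentation ρ τ ⊔ isotypicSubrepresentation ρ τ' = ⊤ := by
  refine eq_top_of_forall_isAtom_le fun U hU => ?_
  obtain hτ | hτ' := hρ U hU
  · exact (le_isotypicSubrepresentation hτ).trans le_sup_left
  · exact (le_isotypicSubrepresentation hτ').trans le_sup_right

end Isotypic

theorem stmt_6_general {K X : Type*} [Field K] {σ : K →+* K} [RingHomInvPair σ σ] [Group H]
    [AddCommGroup V] [Module K V] [FiniteDimensional K V]
    [AddCommGroup X] [Module K X] [FiniteDimensional K X]
    {ρ : Representation K H V} [ρ.IsSemisimpleRepresentation]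
    {π : Representation K H X} [π.IsIrreducible] (hπ : IsEmpty (π.Equiv (contragredient σ π)))
    (hρ : ∀ U : Subrepresentation ρ, IsAtom U → Nonempty (U.toRepresentation.Equiv π) ∨
      Nonempty (U.toRepresentation.Equiv (contragredient σ π)))
    {B : V →ₛₗ[σ] V →ₗ[K] K} (hB : ∀ h v w, B (ρ h v) (ρ h w) = B v w)
    {ε : K} (hsymm : ∀ v w, B w v = ε * σ (B v w)) (hsep : B.SeparatingLeft) :
    let Z := isotypicSubrepresentation ρ π
    ∃ Φ : ρ.Equiv (Z.toRepresentation.prod (contragredient σ Z.toRepresentation)),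
      ∀ v w, tautologicalForm ε (Φ v) (Φ w) = B v w := by
  have : IsEmpty ((contragredient σ π).Equiv (contragredient σ (contragredient σ π))) :=
    ⟨fun e => hπ.false ((doubleContragredientEquiv σ π).trans e.symm)⟩
  exact exists_isometry_tautologicalForm_of_isotropic hB hsymm hsep
    (isotypicSubrepresentation_le_orthogonalBilin hB)
    (isotypicSubrepresentation_le_orthogonalBilin hB)
    (congrArg Subrepresentation.toSubmodule (isotypicSubrepresentation_sup_eq_top hρ))

section Complex

variable [Group H] [AddCommGroup V] [Module ℂ V] [AddCommGroup P] [Module ℂ P]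
  {ρ : Representation ℂ H V} {ρP : Representation ℂ H P} {σ : ℂ →+* ℂ}

theorem ringHomInvPair_of_eq_id_or_eq_star (hσ : σ = RingHom.id ℂ ∨ σ = starRingEnd ℂ) :
    RingHomInvPair σ σ := by
  obtain rfl | rfl := hσ <;> infer_instance

theorem Semisimple.isSemisimpleRepresentation (hρ : Semisimple ρ) :
    ρ.IsSemisimpleRepresentation where
  exists_isCompl U := by
    obtain ⟨U', hU', hcompl⟩ := hρ U.toSubmodule U.apply_mem_toSubmodule
    exact ⟨⟨U', hU'⟩,
      disjoint_iff.2 (Subrepresentation.toSubmodule_injective hcompl.inf_eq_bot),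
      codisjoint_iff.2 (Subrepresentation.toSubmodule_injective hcompl.sup_eq_top)⟩

theorem irredSub_toSubmodule_of_isAtom {U : Subrepresentation ρ} (hU : IsAtom U) :
    IrredSub ρ U.toSubmodule := by
  refine ⟨U.apply_mem_toSubmodule, fun h => hU.1 (Subrepresentation.toSubmodule_injective h),
    fun U' hle hU' => ?_⟩
  exact (hU.le_iff.1 (show (⟨U', hU'⟩ : Subrepresentation ρ) ≤ U from hle)).imp
    (congrArg Subrepresentation.toSubmodule) (congrArg Subrepresentation.toSubmodule)

theorem repIsoExt_toSubmodule_iff {U : Subrepresentation ρ} :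
    RepIsoExt ρ ρP U.toSubmodule ↔ Nonempty (U.toRepresentation.Equiv ρP) := by
  constructor
  · rintro ⟨e, he⟩
    exact ⟨.mk e fun h => LinearMap.ext fun u =>
      he h u u.2 (U.apply_mem_toSubmodule h u.2)⟩
  · rintro ⟨e⟩
    exact ⟨e.toLinearEquiv, fun h v hv _ => e.toIntertwiningMap.isIntertwining _ _ h ⟨v, hv⟩⟩

theorem RepDualIsoExt.nonempty_equiv {U : Subrepresentation ρ}
    (hU : RepDualIsoExt σ ρ ρP U.toSubmodule) :
    Nonempty (U.toRepresentation.Equiv (contragredient σ ρP)) := by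
  obtain ⟨e, he⟩ := hU
  exact ⟨.mk e fun h => LinearMap.ext fun u => LinearMap.ext fun w =>
    he h u u.2 (U.apply_mem_toSubmodule h u.2) w⟩

theorem sSup_invt_repIsoExt_eq_isotypicSubrepresentation :
    sSup {U | Invt ρ U ∧ RepIsoExt ρ ρP U} = (isotypicSubrepresentation ρ ρP).toSubmodule := by
  apply le_antisymm
  · exact sSup_le fun U ⟨hU, hiso⟩ =>
      le_isotypicSubrepresentation (U := ⟨U, hU⟩) (repIsoExt_toSubmodule_iff.1 hiso)
  · exact isotypicSubrepresentation_le_iff.2 fun U hU =>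
      le_sSup ⟨U.apply_mem_toSubmodule, repIsoExt_toSubmodule_iff.2 hU⟩

end Complex

/-- If `(V,B)` is a nondegenerate `(ι,ε)`-symmetric `H`-module which is
bi-isotypical of type `{π, π^{ι,*}}` with `π` not isomorphic to `π^{ι,*}`, then `(V,B)` is
`H`-equivariantly isometric to `Z × Z^{ι,*}` with the tautological form, where `Z = I_π`. -/
theorem stmt_6 [Group H] [AddCommGroup V] [Module ℂ V] [FiniteDimensional ℂ V]
    [AddCommGroup P] [Module ℂ P] [FiniteDimensional ℂ P]
    (σ : ℂ →+* ℂ) (hσ : σ = RingHom.id ℂ ∨ σ = starRingEnd ℂ)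
    (ε : ℂ) (hε : ε = 1 ∨ ε = -1)
    (ρ : Representation ℂ H V) (hss : Semisimple ρ)
    (ρP : Representation ℂ H P)
    (hPss : ∀ U : Submodule ℂ P, (∀ (h : H) (v : P), v ∈ U → ρP h v ∈ U) →
      ∃ U', (∀ (h : H) (v : P), v ∈ U' → ρP h v ∈ U') ∧ IsCompl U U')
    (hPirr : ∀ U : Submodule ℂ P, (∀ (h : H) (v : P), v ∈ U → ρP h v ∈ U) →
      U = ⊥ ∨ U = ⊤)
    -- π is not isomorphic to π^{ι,*}
    (hnsd : ¬ ∃ e : P ≃ₗ[ℂ] (P →ₛₗ[σ] ℂ), ∀ (h : H) (v w : P),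
      e (ρP h v) w = e v (ρP h⁻¹ w))
    -- every irreducible invariant subspace of V is isomorphic to π or to π^{ι,*}
    (hbi : ∀ U : Submodule ℂ V, IrredSub ρ U →
      RepIsoExt ρ ρP U ∨ RepDualIsoExt σ ρ ρP U)
    (B : V → V → ℂ)
    (hB1 : ∀ v v' w, B (v + v') w = B v w + B v' w)
    (hB2 : ∀ v w w', B v (w + w') = B v w + B v w')
    (hB3 : ∀ (a : ℂ) (v w : V), B (a • v) w = σ a * B v w)
    (hB4 : ∀ (a : ℂ) (v w : V), B v (a • w) = a * B v w)
    (hBinv : ∀ (h : H) (v w : V), B (ρ h v) (ρ h w) = B v w)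
    (hBsym : ∀ v w, B w v = ε * σ (B v w))
    (hBnd : ∀ v, (∀ w, B v w = 0) → v = 0) :
    -- Z = I_π, the sum of all invariant subspaces of V isomorphic to π
    let Z : Submodule ℂ V := sSup {U | Invt ρ U ∧ RepIsoExt ρ ρP U}
    ∃ Φ : V ≃ₗ[ℂ] Z × (Z →ₛₗ[σ] ℂ),
      -- Φ is H-equivariant (contragredient action on the dual factor)
      (∀ (h : H) (v : V), ((Φ (ρ h v)).1 : V) = ρ h ((Φ v).1 : V)) ∧
      (∀ (h : H) (v : V) (w : V) (hw : w ∈ Z) (hw' : ρ h⁻¹ w ∈ Z),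
        (Φ (ρ h v)).2 ⟨w, hw⟩ = (Φ v).2 ⟨ρ h⁻¹ w, hw'⟩) ∧
      -- Φ carries B to the tautological (ι,ε)-symmetric form
      (∀ v v' : V, ε * σ ((Φ v).2 (Φ v').1) + (Φ v').2 (Φ v).1 = B v v') := by
  have := ringHomInvPair_of_eq_id_or_eq_star hσ
  have := hss.isSemisimpleRepresentation
  have hempty : IsEmpty (ρP.Equiv (contragredient σ ρP)) := ⟨fun e => hnsd
    ⟨e.toLinearEquiv, fun h v w =>
      LinearMap.congr_fun (e.toIntertwiningMap.isIntertwining _ _ h v) w⟩⟩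
  have := nontrivial_of_isEmpty_equiv_contragredient hempty
  have : ρP.IsIrreducible := isIrreducible_of_forall_eq_bot_or_eq_top fun U =>
    (hPirr U.toSubmodule U.apply_mem_toSubmodule).imp
      (Subrepresentation.toSubmodule_injective ·) (Subrepresentation.toSubmodule_injective ·)
  have hatom (U : Subrepresentation ρ) (hU : IsAtom U) :=
    (hbi U.toSubmodule (irredSub_toSubmodule_of_isAtom hU)).imp
      repIsoExt_toSubmodule_iff.1 RepDualIsoExt.nonempty_equiv
  obtain ⟨Φ, hΦ⟩ := stmt_6_general hempty hatom
    (B := LinearMap.mk₂'ₛₗ σ (RingHom.id ℂ) B hB1 hB3 hB2 hB4) hBinv hBsym hBnd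
  rw [sSup_invt_repIsoExt_eq_isotypicSubrepresentation]
  refine ⟨Φ.toLinearEquiv, fun h v => ?_, fun h v w hw _ => ?_, hΦ⟩
  · exact congrArg (fun x => (x.1 : V)) (Φ.toIntertwiningMap.isIntertwining _ _ h v)
  · exact LinearMap.congr_fun (congrArg Prod.snd (Φ.toIntertwiningMap.isIntertwining _ _ h v))
      ⟨w, hw⟩
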